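/- arXiv:2301.03313 — 9 statements merged into one kernel-verified Lean document; each statement's English description precedes it below -/
import Mathlib

section
/- Let T be a labeled transition system on state type S and let ≈ be an equivalence relation on S. Then ≈ is a homogeneous bisimulation on T if and only if the membership relation (relating a state p ∈ S to an equivalence class c iff p ∈ c, i.e. the class of p equals c) is a bisimulation between T and the quotient LTS T/≈. -/
/-- A relation `R` is a simulation from LTS `T₁` to LTS `T₂` (same label type). -/
def IsSimulation {S₁ S₂ L : Type*} (T₁ : S₁ → L → S₁ → Prop) (T₂ : S₂ → L → S₂ → Prop)
    (R : S₁ → S₂ → Prop) : Prop :=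
  ∀ p q ℓ p', R p q → T₁ p ℓ p' → ∃ q', R p' q' ∧ T₂ q ℓ q'

/-- A relation `R` is a bisimulation between LTSs `T₁` and `T₂`. -/
def IsBisimulation {S₁ S₂ L : Type*} (T₁ : S₁ → L → S₁ → Prop) (T₂ : S₂ → L → S₂ → Prop)
    (R : S₁ → S₂ → Prop) : Prop :=
  IsSimulation T₁ T₂ R ∧ IsSimulation T₂ T₁ (fun q p => R p q)


/-- The quotient LTS `T/≈`: states are equivalence classes, with a transition
`c →[ℓ] c'` iff every member of `c` has an `ℓ`-transition to some member of `c'`. -/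
def quotLTS {S L : Type*} (T : S → L → S → Prop) (s : Setoid S) :
    Quotient s → L → Quotient s → Prop :=
  fun c ℓ c' => ∀ p : S, Quotient.mk s p = c → ∃ p' : S, Quotient.mk s p' = c' ∧ T p ℓ p'

section

variable {S L : Type*} {T : S → L → S → Prop}

theorem isSimulation_swap_iff_of_symm {T' : S → L → S → Prop} {R : S → S → Prop} [Std.Symm R] :
    IsSimulation T T' (fun q p => R p q) ↔ IsSimulation T T' R :=
  iff_of_eq (congrArg (IsSimulation T T') Std.Symm.swap_eq)

theorem isBisimulation_iff_isSimulation_of_symm {R : S → S → Prop} [Std.Symm R] :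
    IsBisimulation T T R ↔ IsSimulation T T R :=
  and_iff_left_of_imp isSimulation_swap_iff_of_symm.mpr

theorem isSimulation_graph_iff {S' : Type*} {T' : S' → L → S' → Prop} {f : S → S'} :
    IsSimulation T T' (fun p q => f p = q) ↔ ∀ p ℓ p', T p ℓ p' → T' (f p) ℓ (f p') := by
  simp only [IsSimulation, exists_eq_left']
  exact ⟨fun h p ℓ p' => h p (f p) ℓ p' rfl, fun h p _ ℓ p' hpq => hpq ▸ h p ℓ p'⟩

theorem quotLTS_mk_iff {s : Setoid S} {p p' : S} {ℓ : L} :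
    quotLTS T s (Quotient.mk s p) ℓ (Quotient.mk s p') ↔
      ∀ q, s p q → ∃ q', s p' q' ∧ T q ℓ q' := by
  simp only [quotLTS, Quotient.eq, s.comm' (y := p), s.comm' (y := p')]

theorem isSimulation_mem_quotLTS_iff (s : Setoid S) :
    IsSimulation T (quotLTS T s) (fun p c => Quotient.mk s p = c) ↔ IsSimulation T T s :=
  calc IsSimulation T (quotLTS T s) (fun p c => Quotient.mk s p = c)
    _ ↔ ∀ p ℓ p', T p ℓ p' → ∀ q, s p q → ∃ q', s p' q' ∧ T q ℓ q' := by
      -- Membership in a class is the graph of the quotient map.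
      simp only [isSimulation_graph_iff, quotLTS_mk_iff]
    _ ↔ IsSimulation T T s :=
      ⟨fun h p q ℓ p' hpq hT => h p ℓ p' hT q hpq,
        fun h p ℓ p' hT q hpq => h p q ℓ p' hpq hT⟩

theorem isSimulation_quotLTS_mem (s : Setoid S) :
    IsSimulation (quotLTS T s) T (fun c p => Quotient.mk s p = c) :=
  fun _ p _ _ hpc hT => hT p hpc

theorem isBisimulation_mem_quotLTS_iff (s : Setoid S) :
    IsBisimulation T (quotLTS T s) (fun p c => Quotient.mk s p = c) ↔ IsSimulation T T s :=
  (and_iff_left (isSimulation_quotLTS_mem s)).trans (isSimulation_mem_quotLTS_iff s)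

end

/-- An equivalence relation `r` on the states of `T` is a homogeneous bisimulation
on `T` iff the membership relation (relating `p` to the class `c` iff the class of
`p` equals `c`) is a bisimulation between `T` and the quotient LTS `T/r`. -/
theorem equivalence_bisimulation_iff_mem_bisimulation {S L : Type*}
    (T : S → L → S → Prop) (r : S → S → Prop) (hr : Equivalence r) :
    IsBisimulation T T r ↔
      IsBisimulation T (quotLTS T ⟨r, hr⟩)
        (fun p c => Quotient.mk ⟨r, hr⟩ p = c) := by
  have : Std.Symm r := ⟨fun _ _ => hr.symm⟩
  calc IsBisimulation T T r
    _ ↔ IsSimulation T T r := isBisimulation_iff_isSimulation_of_symm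
    _ ↔ IsBisimulation T (quotLTS T ⟨r, hr⟩) (fun p c => Quotient.mk ⟨r, hr⟩ p = c) :=
      (isBisimulation_mem_quotLTS_iff ⟨r, hr⟩).symm
end

section
/- Let T₁, T₂ be labeled transition systems with the same label type, with state types S₁ and S₂, and let F : S₁ → S₂ be a surjective function whose graph (relating p to F p) is a bisimulation between T₁ and T₂. Let ker F be the equivalence relation on S₁ relating p and p' iff F p = F p'. Then there exists a bijection F̃ from the set of ker F-equivalence classes to S₂ whose graph is a bisimulation between the quotient LTS T₁/(ker F) and T₂. -/
section

variable {S₁ S₂ S₃ L : Type*} {T₁ : S₁ → L → S₁ → Prop} {T₂ : S₂ → L → S₂ → Prop}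
  {T₃ : S₃ → L → S₃ → Prop} {R : S₁ → S₂ → Prop} {R' : S₂ → S₃ → Prop} {F : S₁ → S₂}

theorem IsSimulation.comp (hR : IsSimulation T₁ T₂ R) (hR' : IsSimulation T₂ T₃ R') :
    IsSimulation T₁ T₃ (Relation.Comp R R') := by
  rintro p r ℓ p' ⟨q, hpq, hqr⟩ hp
  obtain ⟨q', hpq', hq⟩ := hR p q ℓ p' hpq hp
  obtain ⟨r', hqr', hr⟩ := hR' q r ℓ q' hqr hq
  exact ⟨r', ⟨q', hpq', hqr'⟩, hr⟩

theorem IsBisimulation.symm (hR : IsBisimulation T₁ T₂ R) : IsBisimulation T₂ T₁ (flip R) :=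
  ⟨hR.2, hR.1⟩

theorem IsBisimulation.comp (hR : IsBisimulation T₁ T₂ R) (hR' : IsBisimulation T₂ T₃ R') :
    IsBisimulation T₁ T₃ (Relation.Comp R R') := by
  have hflip : IsSimulation T₃ T₁ (flip (Relation.Comp R R')) :=
    Relation.flip_comp ▸ hR'.2.comp hR.2
  exact ⟨hR.1.comp hR'.1, hflip⟩

theorem IsBisimulation.ker (hF : IsBisimulation T₁ T₂ (fun p q => F p = q)) :
    IsBisimulation T₁ T₁ (Setoid.ker F) := by
  have ker_eq_comp : ⇑(Setoid.ker F) =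
      Relation.Comp (fun p q => F p = q) (flip fun p q => F p = q) := by
    ext p p'
    simp [Relation.Comp, flip, Setoid.ker_def, eq_comm]
  rw [ker_eq_comp]
  exact hF.comp hF.symm

theorem isSimulation_mk_quotLTS {s : Setoid S₁} (hs : IsSimulation T₁ T₁ s) :
    IsSimulation T₁ (quotLTS T₁ s) (fun p c => Quotient.mk s p = c) := by
  rintro p _ ℓ p' rfl hp
  refine ⟨Quotient.mk s p', rfl, fun r hr => ?_⟩
  obtain ⟨r', hpr', hr'⟩ := hs p r ℓ p' (Quotient.exact hr.symm) hp
  exact ⟨r', (Quotient.sound hpr').symm, hr'⟩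

theorem isSimulation_quotLTS_mk (T : S₁ → L → S₁ → Prop) (s : Setoid S₁) :
    IsSimulation (quotLTS T s) T (fun c p => Quotient.mk s p = c) :=
  fun _ p _ _ hpc hc => hc p hpc

theorem isBisimulation_mk_quotLTS {s : Setoid S₁} (hs : IsSimulation T₁ T₁ s) :
    IsBisimulation T₁ (quotLTS T₁ s) (fun p c => Quotient.mk s p = c) :=
  ⟨isSimulation_mk_quotLTS hs, isSimulation_quotLTS_mk T₁ s⟩

theorem IsBisimulation.kerLift (hF : IsBisimulation T₁ T₂ (fun p q => F p = q)) :
    IsBisimulation (quotLTS T₁ (Setoid.ker F)) T₂ (fun c q => Setoid.kerLift F c = q) := by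
  have kerLift_eq_comp : (fun c q => Setoid.kerLift F c = q) =
      Relation.Comp (flip fun p c => Quotient.mk (Setoid.ker F) p = c)
        (fun p q => F p = q) := by
    ext c q
    constructor
    · induction c using Quotient.inductionOn with
      | h p => exact fun hpq => ⟨p, rfl, hpq⟩
    · rintro ⟨p, rfl, hpq⟩
      exact hpq
  rw [kerLift_eq_comp]
  exact (isBisimulation_mk_quotLTS hF.ker.1).symm.comp hF

end

/-- Bisimulation quotienting: if `F : S₁ → S₂` is surjective and its graph is a
bisimulation between `T₁` and `T₂`, then there is a bijection `F̃` from the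
`ker F`-equivalence classes to `S₂` whose graph is a bisimulation between the
quotient LTS `T₁/(ker F)` and `T₂`. -/
theorem bisimulation_quotient {S₁ S₂ L : Type*}
    (T₁ : S₁ → L → S₁ → Prop) (T₂ : S₂ → L → S₂ → Prop)
    (F : S₁ → S₂) (hF : Function.Surjective F)
    (hbis : IsBisimulation T₁ T₂ (fun p q => F p = q)) :
    ∃ Ft : Quotient (Setoid.ker F) → S₂, Function.Bijective Ft ∧
      IsBisimulation (quotLTS T₁ (Setoid.ker F)) T₂ (fun c q => Ft c = q) :=
  ⟨Setoid.kerLift F, ⟨Setoid.kerLift_injective F, Quotient.lift_surjective _ _ hF⟩, hbis.kerLift⟩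
end

section
/- Let T be a labeled transition system on state type S and let ≈ be an equivalence relation on S which is a homogeneous bisimulation on T. Then the transitive closure of the quotient LTS equals the quotient of the transitive closure: (T/≈)* = T*/≈, i.e. for all equivalence classes c, c' and all finite lists of labels w, c →[w] c' holds in (T/≈)* if and only if it holds in T*/≈. -/
/-- The transitive closure `T*` of an LTS `T`: labels are finite lists of labels
of `T`, and `p →[[ℓ₁,…,ℓₙ]] p'` iff there is a chain of `T`-transitions from `p`
to `p'` with these labels. -/
inductive LTSStar {S L : Type*} (T : S → L → S → Prop) : S → List L → S → Prop
  | nil (p : S) : LTSStar T p [] p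
  | cons {p p' p'' : S} {ℓ : L} {w : List L} :
      T p ℓ p' → LTSStar T p' w p'' → LTSStar T p (ℓ :: w) p''

/-! The star preserves simulations. Relating each class to its members is always a simulation from
`T/≈` to `T`, and starring it gives `(T/≈)* ⊆ T*/≈`. When `≈` is a simulation, a transition of one
member is matched by all members of its class, so the projection to the quotient is a simulation
from `T` to `T/≈`, and starring it gives the reverse inclusion. -/

theorem IsSimulation.ltsStar {S₁ S₂ L : Type*} {T₁ : S₁ → L → S₁ → Prop}
    {T₂ : S₂ → L → S₂ → Prop} {R : S₁ → S₂ → Prop} (hR : IsSimulation T₁ T₂ R) :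
    IsSimulation (LTSStar T₁) (LTSStar T₂) R := by
  intro p q w p' hpq hp
  induction hp generalizing q with
  | nil p => exact ⟨q, hpq, .nil q⟩
  | cons hstep _ ih =>
    obtain ⟨q₁, hq₁, hqstep⟩ := hR _ q _ _ hpq hstep
    obtain ⟨q', hq', hqstar⟩ := ih q₁ hq₁
    exact ⟨q', hq', .cons hqstep hqstar⟩

section Quotient

variable {S L : Type*} (T : S → L → S → Prop) (s : Setoid S)

theorem isSimulation_quotLTS_representative :
    IsSimulation (quotLTS T s) T (fun c p => Quotient.mk s p = c) :=
  fun _ p _ _ hp hstep => hstep p hp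

variable {T s} in
theorem IsSimulation.quotient_mk (hs : IsSimulation T T s.r) :
    IsSimulation T (quotLTS T s) (fun p c => Quotient.mk s p = c) := by
  rintro p _ ℓ p' rfl hstep
  refine ⟨Quotient.mk s p', rfl, fun q hq => ?_⟩
  have hpq : s.r p q := s.symm (Quotient.exact hq)
  obtain ⟨q', hpq', hqstep⟩ := hs p q ℓ p' hpq hstep
  exact ⟨q', Quotient.sound (s.symm hpq'), hqstep⟩

end Quotient

/-- If the equivalence relation `r` is a homogeneous bisimulation on `T`, then the
transitive closure of the quotient LTS equals the quotient of the transitive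
closure: `(T/r)* = T*/r`. -/
theorem star_quotient_eq_quotient_star {S L : Type*}
    (T : S → L → S → Prop) (r : S → S → Prop) (hr : Equivalence r)
    (hbis : IsBisimulation T T r) :
    ∀ (c c' : Quotient (⟨r, hr⟩ : Setoid S)) (w : List L),
      LTSStar (quotLTS T ⟨r, hr⟩) c w c' ↔ quotLTS (LTSStar T) ⟨r, hr⟩ c w c' := by
  intro c c' w
  constructor
  · intro hstar p hp
    exact (isSimulation_quotLTS_representative T _).ltsStar c p w c' hp hstar
  · intro hquot
    obtain ⟨p, hp⟩ := Quotient.exists_rep c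
    obtain ⟨p', rfl, hstar⟩ := hquot p hp
    have hproj := IsSimulation.quotient_mk (s := ⟨r, hr⟩) hbis.1
    obtain ⟨_, rfl, hclass⟩ := hproj.ltsStar p c w p' hp hstar
    exact hclass
end

section
/- Let (𝒳, ∘, ε, Z) be a solution space and let X be a finite nonempty subset of 𝒳. Then the set of valid states X̄ = {x ∈ 𝒳 : ∃ y ∈ 𝒳, x ∘ y ∈ X} is finite. -/
/-! A valid state is a left divisor of some feasible `x`. Concatenating decompositions of the two
factors in `x = a * b` gives a decomposition of `x` having one of `a` as a prefix. Since `x` has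
only finitely many decompositions, each with finitely many prefixes, it has finitely many left
divisors. -/

/-- A solution space over a monoid `M` (with operation `*` and neutral element
`1`): a step set `Z ⊆ M` not containing `1`, such that every element of `M` has
a finite, nonzero number of decompositions as a product of a list of steps. -/
structure SolutionSpace (M : Type*) [Monoid M] where
  /-- The set of steps. -/
  Z : Set M
  one_not_mem : (1 : M) ∉ Z
  decomp_finite : ∀ x : M, {l : List M | (∀ z ∈ l, z ∈ Z) ∧ l.prod = x}.Finite
  decomp_nonempty : ∀ x : M, {l : List M | (∀ z ∈ l, z ∈ Z) ∧ l.prod = x}.Nonempty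

/-- The set of valid states `X̄` of an instance with feasible set `X`: the
partial solutions that can be expanded into a feasible solution. -/
def validStates {M : Type*} [Monoid M] (X : Set M) : Set M :=
  {x : M | ∃ y : M, x * y ∈ X}

section Decompositions

variable {M : Type*} [Monoid M] {Z X : Set M} {a x : M}

/-- The decompositions of `x` over the step set `Z`: the lists of steps with product `x`. Order and
multiplicity count, and the empty list is a decomposition of `1`. -/
def decompositions (Z : Set M) (x : M) : Set (List M) :=
  {l | (∀ z ∈ l, z ∈ Z) ∧ l.prod = x}

theorem exists_prefix_decomposition_of_dvd (hZ : ∀ x, (decompositions Z x).Nonempty)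
    (h : a ∣ x) : ∃ l ∈ decompositions Z x, ∃ p, p <+: l ∧ p.prod = a := by
  obtain ⟨b, rfl⟩ := h
  obtain ⟨p, hpZ, hp⟩ := hZ a
  obtain ⟨q, hqZ, hq⟩ := hZ b
  exact ⟨p ++ q, ⟨List.forall_mem_append.2 ⟨hpZ, hqZ⟩, by rw [List.prod_append, hp, hq]⟩,
    p, List.prefix_append p q, hp⟩

theorem finite_setOf_dvd (hZ : ∀ x, (decompositions Z x).Nonempty)
    (hx : (decompositions Z x).Finite) : {a | a ∣ x}.Finite := by
  have prefixes_finite (l : List M) : {p | p <+: l}.Finite := by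
    simpa only [List.mem_inits] using l.inits.finite_toSet
  refine (hx.biUnion fun l _ ↦ (prefixes_finite l).image List.prod).subset fun a ha ↦ ?_
  obtain ⟨l, hl, p, hpl, hp⟩ := exists_prefix_decomposition_of_dvd hZ ha
  exact Set.mem_biUnion hl ⟨p, hpl, hp⟩

theorem validStates_eq_biUnion_setOf_dvd (X : Set M) :
    validStates X = ⋃ x ∈ X, {a | a ∣ x} := by
  ext a
  simp [validStates, dvd_def]

theorem validStates_finite_general (hZ : ∀ x, (decompositions Z x).Nonempty) (hX : X.Finite)
    (hdecomp : ∀ x ∈ X, (decompositions Z x).Finite) : (validStates X).Finite := by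
  rw [validStates_eq_biUnion_setOf_dvd]
  exact hX.biUnion fun x hx ↦ finite_setOf_dvd hZ (hdecomp x hx)

end Decompositions

/-- For a solution space and a finite nonempty feasible set `X`, the set of
valid states `X̄` is finite. -/
theorem validStates_finite {M : Type*} [Monoid M] (S : SolutionSpace M)
    (X : Set M) (hfin : X.Finite) (hne : X.Nonempty) :
    (validStates X).Finite :=
  validStates_finite_general S.decomp_nonempty hfin fun x _ ↦ S.decomp_finite x
end

section
/- Let (𝒳, ∘, ε, Z) be a solution space, X a finite nonempty subset of 𝒳, and X̄ = {x ∈ 𝒳 : ∃ y ∈ 𝒳, x ∘ y ∈ X}. Then for every x ∈ X̄, the set of allowed step actions {z ∈ Z : x ∘ z ∈ X̄} is finite (even when Z is infinite). -/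
section Factorizations

variable {M : Type*} [Monoid M] {Z : Set M} {x y : M} {l₁ l₂ : List M}

/-- The factorizations of `x` over `Z`: the words in the alphabet `Z` whose product is `x`. It
names the set of decompositions that occurs in the fields of `SolutionSpace`. -/
def factorizations (Z : Set M) (x : M) : Set (List M) :=
  {l : List M | (∀ z ∈ l, z ∈ Z) ∧ l.prod = x}

/-- The two-sided factors of `x`, in the sense in which a factor of a word is a contiguous
subword. -/
def factors (x : M) : Set M :=
  {m : M | ∃ a b : M, a * m * b = x}

theorem append_mem_factorizations (h₁ : l₁ ∈ factorizations Z x) (h₂ : l₂ ∈ factorizations Z y) :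
    l₁ ++ l₂ ∈ factorizations Z (x * y) :=
  ⟨List.forall_mem_append.2 ⟨h₁.1, h₂.1⟩, by rw [List.prod_append, h₁.2, h₂.2]⟩

theorem exists_infix_prod_eq_of_mem_factors (hZ : ∀ m : M, (factorizations Z m).Nonempty)
    {m : M} (hm : m ∈ factors x) :
    ∃ l ∈ factorizations Z x, ∃ s : List M, s <:+: l ∧ s.prod = m := by
  obtain ⟨a, b, rfl⟩ := hm
  obtain ⟨la, ha⟩ := hZ a
  obtain ⟨lm, hm⟩ := hZ m
  obtain ⟨lb, hb⟩ := hZ b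
  exact ⟨la ++ lm ++ lb, append_mem_factorizations (append_mem_factorizations ha hm) hb,
    lm, ⟨la, lb, rfl⟩, hm.2⟩

theorem finite_factors (hZ : ∀ m : M, (factorizations Z m).Nonempty)
    (hx : (factorizations Z x).Finite) : (factors x).Finite := by
  have hprods : (⋃ l ∈ factorizations Z x, List.prod '' {s | s ∈ l.sublists}).Finite :=
    hx.biUnion fun l _ => l.sublists.finite_toSet.image List.prod
  refine hprods.subset fun m hm => ?_
  obtain ⟨l, hl, s, hs, hprod⟩ := exists_infix_prod_eq_of_mem_factors hZ hm
  exact Set.mem_biUnion hl ⟨s, List.mem_sublists.2 hs.sublist, hprod⟩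

theorem allowed_steps_finite_general {X : Set M} (hZ : ∀ m : M, (factorizations Z m).Nonempty)
    (hX : X.Finite) (hfac : ∀ w ∈ X, (factorizations Z w).Finite) :
    {m : M | ∃ x : M, x * m ∈ validStates X}.Finite := by
  refine (hX.biUnion fun w hw => finite_factors hZ (hfac w hw)).subset ?_
  rintro m ⟨x, y, hxmy⟩
  exact Set.mem_biUnion hxmy ⟨x, y, rfl⟩

end Factorizations

/-- From any valid state `x`, the set of allowed step actions
`{z ∈ Z : x * z ∈ X̄}` is finite, even when `Z` is infinite. -/
theorem allowed_steps_finite {M : Type*} [Monoid M] (S : SolutionSpace M)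
    (X : Set M) (hfin : X.Finite) (hne : X.Nonempty) :
    ∀ x ∈ validStates X, {z : M | z ∈ S.Z ∧ x * z ∈ validStates X}.Finite := by
  intro x _
  exact (allowed_steps_finite_general S.decomp_nonempty hfin fun w _ => S.decomp_finite w).subset
    fun z hz => ⟨x, hz.2⟩
end

section
/- Let (𝒳, ∘, ε, Z) be a solution space, X a finite nonempty subset of 𝒳, and X̄ = {x ∈ 𝒳 : ∃ y ∈ 𝒳, x ∘ y ∈ X}. Then any trajectory contains only finitely many step actions: for every x₀ ∈ X̄ and every sequence z : ℕ → 𝒳 with z n ∈ Z for all n, there exists some n such that the partial product x₀ ∘ z 0 ∘ z 1 ∘ ⋯ ∘ z n does not belong to X̄. -/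
/-!
Every element is a product of steps, so inserting decompositions of `x` and `y` around a word `l`
of steps turns `x * l.prod * y ∈ X` into a decomposition of an element of `X` at least as long as
`l`. If `X` is finite, its elements have only finitely many decompositions between them, so the
length of `l` is bounded, uniformly in the starting state `x`.
-/

section Decompositions

variable {M : Type*} [Monoid M] {Z X : Set M}

/-- The decompositions of `x` into steps, as words over `Z`, for an arbitrary set `Z`. For the step
set of a `SolutionSpace` these are definitionally the sets in `decomp_finite` and
`decomp_nonempty`. -/
def stepDecompositions (Z : Set M) (x : M) : Set (List M) :=
  {l : List M | (∀ z ∈ l, z ∈ Z) ∧ l.prod = x}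

theorem append_mem_stepDecompositions {x y : M} {l m : List M}
    (hl : l ∈ stepDecompositions Z x) (hm : m ∈ stepDecompositions Z y) :
    l ++ m ∈ stepDecompositions Z (x * y) :=
  ⟨List.forall_mem_append.2 ⟨hl.1, hm.1⟩, by rw [List.prod_append, hl.2, hm.2]⟩

theorem exists_length_le_of_finite_stepDecompositions (hX : X.Finite)
    (hdecomp : ∀ x ∈ X, (stepDecompositions Z x).Finite) :
    ∃ B : ℕ, ∀ x ∈ X, ∀ l ∈ stepDecompositions Z x, l.length ≤ B := by
  obtain ⟨B, hB⟩ := ((hX.biUnion hdecomp).image List.length).bddAbove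
  exact ⟨B, fun _ hx l hl => hB ⟨l, Set.mem_biUnion hx hl, rfl⟩⟩

theorem length_le_of_mul_prod_mem_validStates {B : ℕ}
    (hgen : ∀ x, (stepDecompositions Z x).Nonempty)
    (hB : ∀ x ∈ X, ∀ l ∈ stepDecompositions Z x, l.length ≤ B)
    {x : M} {l : List M} (hl : ∀ z ∈ l, z ∈ Z) (hx : x * l.prod ∈ validStates X) :
    l.length ≤ B := by
  obtain ⟨y, hxy⟩ := hx
  obtain ⟨before, hbefore⟩ := hgen x
  obtain ⟨after, hafter⟩ := hgen y
  have hword : before ++ l ++ after ∈ stepDecompositions Z (x * l.prod * y) :=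
    append_mem_stepDecompositions (append_mem_stepDecompositions hbefore ⟨hl, rfl⟩) hafter
  calc
    l.length ≤ (before ++ l ++ after).length := by
      simp only [List.length_append]
      omega
    _ ≤ B := hB _ hxy _ hword

theorem finitely_many_steps_general {B : ℕ}
    (hgen : ∀ x, (stepDecompositions Z x).Nonempty)
    (hB : ∀ x ∈ X, ∀ l ∈ stepDecompositions Z x, l.length ≤ B)
    (x₀ : M) {z : ℕ → M} (hz : ∀ n, z n ∈ Z) {n : ℕ} (hn : B ≤ n) :
    x₀ * ((List.range (n + 1)).map z).prod ∉ validStates X := by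
  intro hvalid
  have hsteps : ∀ w ∈ (List.range (n + 1)).map z, w ∈ Z :=
    List.forall_mem_map.2 fun k _ => hz k
  have hlength := length_le_of_mul_prod_mem_validStates hgen hB hsteps hvalid
  rw [List.length_map, List.length_range] at hlength
  omega

end Decompositions

/-- Any trajectory contains only finitely many step actions: for any valid state
`x₀` and any infinite sequence of steps `z`, some partial product
`x₀ * z 0 * ⋯ * z n` leaves the set of valid states. -/
theorem finitely_many_steps {M : Type*} [Monoid M] (S : SolutionSpace M)
    (X : Set M) (hfin : X.Finite) (hne : X.Nonempty) :
    ∀ x₀ ∈ validStates X, ∀ z : ℕ → M, (∀ n, z n ∈ S.Z) →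
      ∃ n : ℕ, x₀ * ((List.range (n + 1)).map z).prod ∉ validStates X := by
  obtain ⟨B, hB⟩ :=
    exists_length_le_of_finite_stepDecompositions hfin fun x _ => S.decomp_finite x
  exact fun x₀ _ _ hz => ⟨B, finitely_many_steps_general S.decomp_nonempty hB x₀ hz le_rfl⟩
end

section
/- (Soundness of the direct MDP.) Let (𝒳, ∘, ε, Z) be a solution space and (f, X) an instance. Then the set of optimal feasible solutions {x ∈ X : ∀ x' ∈ X, f x ≤ f x'} equals the image under the outcome map of the set of reward-maximizing trajectories, i.e. the set of trajectories from ε whose total reward is greater than or equal to the total reward of every trajectory from ε. -/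
/-- A trajectory from `ε` of the direct MDP: a list of steps such that every
prefix product is a valid state and the full product is feasible. -/
def IsTrajectory {M : Type*} [Monoid M] (S : SolutionSpace M) (X : Set M)
    (l : List M) : Prop :=
  (∀ z ∈ l, z ∈ S.Z) ∧ (∀ k ≤ l.length, (l.take k).prod ∈ validStates X) ∧
    l.prod ∈ X

/-- The total reward of a trajectory `[z₁,…,zₙ]`:
`Σ_{k=1}^n (f(z₁⋯z_{k−1}) − f(z₁⋯z_k))`. -/
def totalReward {M : Type*} [Monoid M] (f : M → ℝ) (l : List M) : ℝ :=
  ∑ k ∈ Finset.range l.length, (f ((l.take k).prod) - f ((l.take (k + 1)).prod))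

/-! Rewards telescope, so the total reward of a trajectory is `f 1` minus the value of its outcome:
maximizing the reward is minimizing `f` at the outcome. Moreover every feasible solution is an
outcome, since each prefix of a decomposition is completed by the remaining steps. -/

section

variable {M : Type*} [Monoid M]

theorem totalReward_eq_sub (f : M → ℝ) (l : List M) : totalReward f l = f 1 - f l.prod := by
  simpa only [totalReward, List.take_zero, List.prod_nil, List.take_length] using
    Finset.sum_range_sub' (fun k => f (l.take k).prod) l.length

theorem totalReward_le_totalReward_iff {f : M → ℝ} {l l' : List M} :
    totalReward f l' ≤ totalReward f l ↔ f l.prod ≤ f l'.prod := by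
  rw [totalReward_eq_sub, totalReward_eq_sub, sub_le_sub_iff_left]

theorem prod_take_mem_validStates {X : Set M} {l : List M} (hl : l.prod ∈ X) (k : ℕ) :
    (l.take k).prod ∈ validStates X :=
  ⟨(l.drop k).prod, by rwa [List.prod_take_mul_prod_drop]⟩

theorem isTrajectory_iff {S : SolutionSpace M} {X : Set M} {l : List M} :
    IsTrajectory S X l ↔ (∀ z ∈ l, z ∈ S.Z) ∧ l.prod ∈ X :=
  ⟨fun ⟨hsteps, _, hX⟩ => ⟨hsteps, hX⟩,
    fun ⟨hsteps, hX⟩ => ⟨hsteps, fun k _ => prod_take_mem_validStates hX k, hX⟩⟩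

theorem image_prod_setOf_isTrajectory (S : SolutionSpace M) (X : Set M) :
    List.prod '' {l : List M | IsTrajectory S X l} = X := by
  refine Set.Subset.antisymm (Set.image_subset_iff.2 fun l hl => (isTrajectory_iff.1 hl).2) ?_
  intro x hx
  obtain ⟨l, hsteps, rfl⟩ := S.decomp_nonempty x
  exact ⟨l, isTrajectory_iff.2 ⟨hsteps, hx⟩, rfl⟩

theorem soundness_direct_MDP_general (S : SolutionSpace M) (f : M → ℝ) (X : Set M) :
    {x ∈ X | ∀ x' ∈ X, f x ≤ f x'} =
      List.prod '' {l : List M | IsTrajectory S X l ∧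
        ∀ l' : List M, IsTrajectory S X l' → totalReward f l' ≤ totalReward f l} := by
  let T := {l : List M | IsTrajectory S X l}
  have image_T : List.prod '' T = X := image_prod_setOf_isTrajectory S X
  calc {x ∈ X | ∀ x' ∈ X, f x ≤ f x'}
      = List.prod '' T ∩ {x | ∀ l' ∈ T, f x ≤ f l'.prod} := by
        simp only [← image_T, Set.forall_mem_image]; rfl
    _ = List.prod '' (T ∩ List.prod ⁻¹' {x | ∀ l' ∈ T, f x ≤ f l'.prod}) :=
        (Set.image_inter_preimage _ _ _).symm
    _ = List.prod '' {l : List M | IsTrajectory S X l ∧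
          ∀ l' : List M, IsTrajectory S X l' → totalReward f l' ≤ totalReward f l} := by
        simp only [totalReward_le_totalReward_iff]; rfl

end

/-- Soundness of the direct MDP: the optimal feasible solutions of an instance
`(f, X)` are exactly the outcomes of the reward-maximizing trajectories from `ε`. -/
theorem soundness_direct_MDP {M : Type*} [Monoid M] (S : SolutionSpace M)
    (f : M → ℝ) (X : Set M) (hfin : X.Finite) (hne : X.Nonempty) :
    {x ∈ X | ∀ x' ∈ X, f x ≤ f x'} =
      List.prod '' {l : List M | IsTrajectory S X l ∧
        ∀ l' : List M, IsTrajectory S X l' → totalReward f l' ≤ totalReward f l} :=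
  soundness_direct_MDP_general S f X
end

section
/- Let (𝒳, ∘, ε, Z) be a solution space and (f, X) an instance with valid states X̄. Consider the direct LTS on X̄ with labels (a, r) ∈ 𝒳 × ℝ and transitions: x →[(z, f(x) − f(x∘z))] x∘z whenever z ∈ Z and x∘z ∈ X̄, and x →[(ε, 0)] x whenever x ∈ X. Consider the reduced LTS on pairs (g, Y) with g : 𝒳 → ℝ and Y ⊆ 𝒳, with transitions: (g, Y) →[(z, g(ε) − g(z))] (g * z, Y * z) whenever z ∈ Z and Y * z ≠ ∅, and (g, Y) →[(ε, 0)] (g, Y) whenever ε ∈ Y. Then the graph of the map Φ : X̄ → (𝒳 → ℝ) × Set 𝒳 defined by Φ(x) = (f * x, X * x) is a bisimulation between the direct LTS and the reduced LTS. -/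
/-- The reduction of an objective function by a partial solution:
`(g * y)(x) = g(y ∘ x)`. -/
def redF {M : Type*} [Monoid M] (g : M → ℝ) (y : M) : M → ℝ :=
  fun x => g (y * x)

/-- The reduction of a feasible set by a partial solution:
`Y * y = {x : y ∘ x ∈ Y}`. -/
def redX {M : Type*} [Monoid M] (Y : Set M) (y : M) : Set M :=
  {x : M | y * x ∈ Y}

/-- The direct LTS of an instance `(f, X)`, on the valid states `X̄`, with labels
`(a, r) ∈ M × ℝ`: step transitions `x →[(z, f x − f (x∘z))] x∘z` for `z ∈ Z` with
`x∘z ∈ X̄`, and neutral transitions `x →[(ε, 0)] x` for `x ∈ X`. -/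
def directLTS {M : Type*} [Monoid M] (S : SolutionSpace M) (f : M → ℝ) (X : Set M) :
    {x : M // x ∈ validStates X} → M × ℝ → {x : M // x ∈ validStates X} → Prop :=
  fun x lab x' =>
    (∃ z ∈ S.Z, (x' : M) = (x : M) * z ∧ lab = (z, f x - f ((x : M) * z))) ∨
    ((x : M) ∈ X ∧ lab = ((1 : M), (0 : ℝ)) ∧ x' = x)

/-- The reduced (BQ) LTS, on instances `(g, Y)`, with labels `(a, r) ∈ M × ℝ`:
step transitions `(g, Y) →[(z, g(ε) − g(z))] (g*z, Y*z)` for `z ∈ Z` with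
`Y*z ≠ ∅`, and neutral transitions `(g, Y) →[(ε, 0)] (g, Y)` for `ε ∈ Y`. -/
def reducedLTS {M : Type*} [Monoid M] (S : SolutionSpace M) :
    (M → ℝ) × Set M → M × ℝ → (M → ℝ) × Set M → Prop :=
  fun gY lab gY' =>
    (∃ z ∈ S.Z, (redX gY.2 z).Nonempty ∧ gY' = (redF gY.1 z, redX gY.2 z) ∧
      lab = (z, gY.1 1 - gY.1 z)) ∨
    ((1 : M) ∈ gY.2 ∧ lab = ((1 : M), (0 : ℝ)) ∧ gY' = gY)

/- `(f, X) ↦ (f * x, X * x)` is a right action of the monoid, so reducing `Φ x` by a step `z` gives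
`Φ (x ∘ z)`. Moreover `X * x ≠ ∅` says exactly that `x` is valid, `ε ∈ X * x` that `x ∈ X`, and
`(f * x) ε = f x`. Hence the transitions out of `Φ x` are precisely the images of the transitions
out of `x`, which is what it means for the graph of a map to be a bisimulation. -/

theorem isBisimulation_graph_iff {S₁ S₂ L : Type*} {T₁ : S₁ → L → S₁ → Prop}
    {T₂ : S₂ → L → S₂ → Prop} {φ : S₁ → S₂} :
    IsBisimulation T₁ T₂ (fun p q => φ p = q) ↔
      ∀ p ℓ q, T₂ (φ p) ℓ q ↔ ∃ p', φ p' = q ∧ T₁ p ℓ p' := by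
  constructor
  · rintro ⟨forth, back⟩ p ℓ q
    refine ⟨back (φ p) p ℓ q rfl, ?_⟩
    rintro ⟨p', rfl, hstep⟩
    obtain ⟨_, rfl, hstep'⟩ := forth p (φ p) ℓ p' rfl hstep
    exact hstep'
  · intro h
    constructor
    · rintro p _ ℓ p' rfl hstep
      exact ⟨φ p', rfl, (h p ℓ (φ p')).2 ⟨p', rfl, hstep⟩⟩
    · rintro _ p ℓ q rfl hstep
      exact (h p ℓ q).1 hstep

section Reduction

variable {M : Type*} [Monoid M]

theorem redF_apply (f : M → ℝ) (x y : M) : redF f x y = f (x * y) :=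
  rfl

theorem redF_redF (f : M → ℝ) (x y : M) : redF (redF f x) y = redF f (x * y) :=
  funext fun w => by simp only [redF_apply, mul_assoc]

theorem mem_redX_iff {X : Set M} {x y : M} : y ∈ redX X x ↔ x * y ∈ X :=
  Iff.rfl

theorem redX_redX (X : Set M) (x y : M) : redX (redX X x) y = redX X (x * y) :=
  Set.ext fun w => by simp only [mem_redX_iff, mul_assoc]

theorem redX_nonempty_iff {X : Set M} {x : M} : (redX X x).Nonempty ↔ x ∈ validStates X :=
  Iff.rfl

/-- The map `Φ` sending a state `x` to the instance `(f * x, X * x)` that remains to be solved once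
`x` has been chosen. It is defined on all of `M`, not only on the valid states, so that it can be
evaluated at `x * z` without a proof of validity. -/
def phi (f : M → ℝ) (X : Set M) (x : M) : (M → ℝ) × Set M :=
  (redF f x, redX X x)

theorem reducedLTS_phi_iff (S : SolutionSpace M) (f : M → ℝ) (X : Set M) (x : M) (ℓ : M × ℝ)
    (q : (M → ℝ) × Set M) :
    reducedLTS S (phi f X x) ℓ q ↔
      (∃ z ∈ S.Z, x * z ∈ validStates X ∧ q = phi f X (x * z) ∧ ℓ = (z, f x - f (x * z))) ∨
      (x ∈ X ∧ ℓ = (1, 0) ∧ q = phi f X x) := by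
  simp only [reducedLTS, phi, redF_redF, redX_redX, redX_nonempty_iff, mem_redX_iff, redF_apply,
    mul_one]

theorem reducedLTS_phi_iff_exists_directLTS (S : SolutionSpace M) (f : M → ℝ) (X : Set M)
    (x : {x : M // x ∈ validStates X}) (ℓ : M × ℝ) (q : (M → ℝ) × Set M) :
    reducedLTS S (phi f X x) ℓ q ↔
      ∃ x' : {x : M // x ∈ validStates X}, phi f X x' = q ∧ directLTS S f X x ℓ x' := by
  rw [reducedLTS_phi_iff]
  constructor
  · rintro (⟨z, hz, hvalid, rfl, hℓ⟩ | ⟨hx, hℓ, rfl⟩)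
    · exact ⟨⟨x * z, hvalid⟩, rfl, Or.inl ⟨z, hz, rfl, hℓ⟩⟩
    · exact ⟨x, rfl, Or.inr ⟨hx, hℓ, rfl⟩⟩
  · rintro ⟨x', rfl, ⟨z, hz, hx', hℓ⟩ | ⟨hx, hℓ, rfl⟩⟩
    · exact Or.inl ⟨z, hz, hx' ▸ x'.2, congrArg (phi f X) hx', hℓ⟩
    · exact Or.inr ⟨hx, hℓ, rfl⟩

theorem phi_bisimulation_general (S : SolutionSpace M) (f : M → ℝ) (X : Set M) :
    IsBisimulation (directLTS S f X) (reducedLTS S) (fun x gY => phi f X x = gY) :=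
  isBisimulation_graph_iff.2 (reducedLTS_phi_iff_exists_directLTS S f X)

end Reduction

/-- The graph of the map `Φ(x) = (f * x, X * x)` is a bisimulation between the
direct LTS of the instance `(f, X)` and the reduced LTS. -/
theorem phi_bisimulation {M : Type*} [Monoid M] (S : SolutionSpace M)
    (f : M → ℝ) (X : Set M) (hfin : X.Finite) (hne : X.Nonempty) :
    IsBisimulation (directLTS S f X) (reducedLTS S)
      (fun x gY => (redF f (x : M), redX X (x : M)) = gY) :=
  phi_bisimulation_general S f X
end

section
/- (Soundness of the BQ-MDP.) Let (𝒳, ∘, ε, Z) be a solution space and (f, X) an instance. Call a list l = [z₁,…,zₙ] of elements of Z a BQ-trajectory from (f, X) if, setting (f₀, X₀) = (f, X) and (fₖ, Xₖ) = (f_{k−1} * zₖ, X_{k−1} * zₖ) for 1 ≤ k ≤ n, one has Xₖ ≠ ∅ for all 1 ≤ k ≤ n and ε ∈ Xₙ; its outcome is z₁ ∘ ⋯ ∘ zₙ and its total reward is Σ_{k=1}^n (f_{k−1}(ε) − f_{k−1}(zₖ)). Then the set of optimal feasible solutions {x ∈ X : ∀ x' ∈ X, f x ≤ f x'} equals the image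 under the outcome map of the set of BQ-trajectories from (f, X) whose total reward is greater than or equal to the total reward of every BQ-trajectory from (f, X). -/
/-- The iterated reduction of the objective along a list of steps:
`f₀ = f` and `fₖ = f_{k−1} * zₖ`; this computes `fₙ` for the full list. -/
def iterRedF {M : Type*} [Monoid M] (f : M → ℝ) : List M → (M → ℝ)
  | [] => f
  | z :: l => iterRedF (redF f z) l

/-- The iterated reduction of the feasible set along a list of steps:
`X₀ = X` and `Xₖ = X_{k−1} * zₖ`; this computes `Xₙ` for the full list. -/
def iterRedX {M : Type*} [Monoid M] (X : Set M) : List M → Set M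
  | [] => X
  | z :: l => iterRedX (redX X z) l

/-- A BQ-trajectory from the instance `(f, X)`: a list `[z₁,…,zₙ]` of steps such
that `Xₖ ≠ ∅` for all `1 ≤ k ≤ n`, and `ε ∈ Xₙ`. -/
def IsBQTrajectory {M : Type*} [Monoid M] (S : SolutionSpace M) (X : Set M)
    (l : List M) : Prop :=
  (∀ z ∈ l, z ∈ S.Z) ∧
    (∀ k : ℕ, 1 ≤ k → k ≤ l.length → (iterRedX X (l.take k)).Nonempty) ∧
    (1 : M) ∈ iterRedX X l

/-- The total reward of a BQ-trajectory `[z₁,…,zₙ]`: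
`Σ_{k=1}^n (f_{k−1}(ε) − f_{k−1}(zₖ))`. -/
def bqTotalReward {M : Type*} [Monoid M] (f : M → ℝ) (l : List M) : ℝ :=
  ∑ k : Fin l.length,
    (iterRedF f (l.take (k : ℕ)) 1 - iterRedF f (l.take (k : ℕ)) (l.get k))

/-!
Reducing along a list of steps is reducing by their product. Hence a BQ-trajectory is a list of
steps with product in `X`: the remaining steps witness that each intermediate feasible set is
nonempty. The `k`-th reward is `f (z₁ ⋯ zₖ₋₁) - f (z₁ ⋯ zₖ)`, so the total reward telescopes to
`f 1 - f (z₁ ⋯ zₙ)`, and maximizing it means minimizing `f` over the outcomes, which are all of `X`.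
-/

section BQTrajectory

variable {M : Type*} [Monoid M]

theorem iterRedF_apply (f : M → ℝ) (l : List M) (x : M) : iterRedF f l x = f (l.prod * x) := by
  induction l generalizing f with
  | nil => simp [iterRedF]
  | cons z l ih => simp [iterRedF, ih, redF, mul_assoc]

theorem mem_iterRedX_iff {X : Set M} {l : List M} {x : M} :
    x ∈ iterRedX X l ↔ l.prod * x ∈ X := by
  induction l generalizing X with
  | nil => simp [iterRedX]
  | cons z l ih => simp [iterRedX, ih, redX, mul_assoc]

theorem isBQTrajectory_iff_prod_mem {S : SolutionSpace M} {X : Set M} {l : List M} :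
    IsBQTrajectory S X l ↔ (∀ z ∈ l, z ∈ S.Z) ∧ l.prod ∈ X := by
  have take_nonempty (hl : l.prod ∈ X) (k : ℕ) : (iterRedX X (l.take k)).Nonempty := by
    refine ⟨(l.drop k).prod, ?_⟩
    rwa [mem_iterRedX_iff, List.prod_take_mul_prod_drop]
  rw [IsBQTrajectory, mem_iterRedX_iff, mul_one]
  exact ⟨fun ⟨hZ, _, hl⟩ ↦ ⟨hZ, hl⟩, fun ⟨hZ, hl⟩ ↦ ⟨hZ, fun k _ _ ↦ take_nonempty hl k, hl⟩⟩

theorem image_prod_setOf_isBQTrajectory (S : SolutionSpace M) (X : Set M) :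
    List.prod '' {l | IsBQTrajectory S X l} = X := by
  refine Set.Subset.antisymm ?_ fun x hx ↦ ?_
  · rintro _ ⟨l, hl, rfl⟩
    exact (isBQTrajectory_iff_prod_mem.mp hl).2
  · obtain ⟨l, hZ, rfl⟩ := S.decomp_nonempty x
    exact ⟨l, isBQTrajectory_iff_prod_mem.mpr ⟨hZ, hx⟩, rfl⟩

theorem bqTotalReward_eq_sub (f : M → ℝ) (l : List M) : bqTotalReward f l = f 1 - f l.prod := by
  calc bqTotalReward f l
      = ∑ k : Fin l.length, (f (l.take k).prod - f (l.take (k + 1)).prod) := by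
        simp [bqTotalReward, iterRedF_apply, List.prod_take_succ]
    _ = ∑ k ∈ Finset.range l.length, (f (l.take k).prod - f (l.take (k + 1)).prod) :=
        Fin.sum_univ_eq_sum_range (fun k ↦ f (l.take k).prod - f (l.take (k + 1)).prod) _
    _ = f 1 - f l.prod := by
        rw [Finset.sum_range_sub']
        simp

theorem forall_bqTotalReward_le_iff {S : SolutionSpace M} {f : M → ℝ} {X : Set M} {l : List M} :
    (∀ l', IsBQTrajectory S X l' → bqTotalReward f l' ≤ bqTotalReward f l) ↔
      ∀ x ∈ X, f l.prod ≤ f x := by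
  conv_rhs => rw [← image_prod_setOf_isBQTrajectory S X, Set.forall_mem_image]
  simp only [bqTotalReward_eq_sub, sub_le_sub_iff_left, Set.mem_ofPred_eq]

theorem soundness_BQ_MDP_general (S : SolutionSpace M) (f : M → ℝ) (X : Set M) :
    {x ∈ X | ∀ x' ∈ X, f x ≤ f x'} =
      List.prod '' {l : List M | IsBQTrajectory S X l ∧
        ∀ l' : List M, IsBQTrajectory S X l' → bqTotalReward f l' ≤ bqTotalReward f l} := by
  let minimizers : Set M := {x | ∀ x' ∈ X, f x ≤ f x'}
  calc X ∩ minimizers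
      = List.prod '' {l | IsBQTrajectory S X l} ∩ minimizers := by
        rw [image_prod_setOf_isBQTrajectory]
    _ = List.prod '' ({l | IsBQTrajectory S X l} ∩ List.prod ⁻¹' minimizers) :=
        (Set.image_inter_preimage _ _ _).symm
    _ = _ := by
        simp only [forall_bqTotalReward_le_iff]
        rfl

end BQTrajectory

/-- Soundness of the BQ-MDP: the optimal feasible solutions of an instance
`(f, X)` are exactly the outcomes of the reward-maximizing BQ-trajectories
from `(f, X)`. -/
theorem soundness_BQ_MDP {M : Type*} [Monoid M] (S : SolutionSpace M)
    (f : M → ℝ) (X : Set M) (hfin : X.Finite) (hne : X.Nonempty) :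
    {x ∈ X | ∀ x' ∈ X, f x ≤ f x'} =
      List.prod '' {l : List M | IsBQTrajectory S X l ∧
        ∀ l' : List M, IsBQTrajectory S X l' →
          bqTotalReward f l' ≤ bqTotalReward f l} :=
  soundness_BQ_MDP_general S f X
end
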